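/- Let S be a factorizable inverse monoid with zero, with semilattice of idempotents E and group of units G, such that the natural connection θ is a dual isomorphism from E onto a sublattice of L(G). Then every finite chain e₁ ≤ e₂ ≤ ⋯ ≤ eₙ of subcentral idempotents of S can be refined to a subcentral idempotent series of S. -/

import Mathlib

/-- An inverse monoid: a monoid in which every element `a` has an inverse `a⁻¹`
satisfying `a * a⁻¹ * a = a` and `a⁻¹ * a * a⁻¹ = a⁻¹`, and this inverse is unique. -/
class InverseMonoid (S : Type*) extends Monoid S, Inv S where
  mul_inv_mul : ∀ a : S, a * a⁻¹ * a = a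
  inv_mul_inv : ∀ a : S, a⁻¹ * a * a⁻¹ = a⁻¹
  inv_unique : ∀ a b : S, a * b * a = a → b * a * b = b → b = a⁻¹

/-- An inverse monoid with a (two-sided absorbing) zero element. -/
class InverseMonoidWithZero (S : Type*) extends InverseMonoid S, Zero S where
  zero_mul : ∀ a : S, 0 * a = 0
  mul_zero : ∀ a : S, a * 0 = 0

/-- The natural partial order on an inverse monoid: `a ≤ b` iff `a = e * b`
for some idempotent `e`. -/
def NatLe {S : Type*} [Monoid S] (a b : S) : Prop :=
  ∃ e : S, IsIdempotentElem e ∧ a = e * b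

/-- The filter `e↑ = {s | e ≤ s}` generated by `e`. -/
def upfilter {S : Type*} [Monoid S] (e : S) : Set S := {s | NatLe e s}

/-- `c` is central in (a subset) `T`: it belongs to `T` and commutes with all elements of `T`. -/
def CentralIn {S : Type*} [Mul S] (T : Set S) (c : S) : Prop :=
  c ∈ T ∧ ∀ s ∈ T, c * s = s * c

/-- A monoid is factorizable if every element is a product of an idempotent and a unit. -/
def Factorizable (S : Type*) [Monoid S] : Prop :=
  ∀ s : S, ∃ e g : S, IsIdempotentElem e ∧ IsUnit g ∧ s = e * g

/-- The natural connection `θ`: for an (idempotent) `e`, the subgroup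
`eθ = {g ∈ G : e * g = e}` of the group of units. -/
def natconn {S : Type*} [Monoid S] (e : S) : Subgroup Sˣ where
  carrier := {g : Sˣ | e * (g : S) = e}
  one_mem' := by simp
  mul_mem' := by
    intro a b ha hb
    simp only [Set.mem_setOf_eq, Units.val_mul] at *
    rw [← mul_assoc, ha, hb]
  inv_mem' := by
    intro a ha
    simp only [Set.mem_setOf_eq] at *
    nth_rewrite 1 [← ha]
    rw [mul_assoc, ← Units.val_mul, mul_inv_cancel, Units.val_one, mul_one]

/-- The natural connection is a dual isomorphism from the idempotents onto a
sublattice of the lattice of subgroups of the group of units: it is injective on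
idempotents, order-reversing in both directions, and its image is closed under
joins and meets of subgroups. -/
def NatconnDualIso (S : Type*) [Monoid S] : Prop :=
  (∀ e f : S, IsIdempotentElem e → IsIdempotentElem f → natconn e = natconn f → e = f) ∧
  (∀ e f : S, IsIdempotentElem e → IsIdempotentElem f →
    (NatLe e f ↔ natconn f ≤ natconn e)) ∧
  (∀ e f : S, IsIdempotentElem e → IsIdempotentElem f →
    (∃ h : S, IsIdempotentElem h ∧ natconn h = natconn e ⊔ natconn f) ∧
    (∃ h : S, IsIdempotentElem h ∧ natconn h = natconn e ⊓ natconn f))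

/-- `j` is the join (least upper bound) of `e` and `f` with respect to the natural order. -/
def IsNatJoin {S : Type*} [Monoid S] (e f j : S) : Prop :=
  NatLe e j ∧ NatLe f j ∧ ∀ x : S, NatLe e x → NatLe f x → NatLe j x

/-- `F_{e,f} = f · e↑`. -/
def Fef {S : Type*} [Monoid S] (e f : S) : Set S := (f * ·) '' upfilter e

/-- `UF_{e,f}`: the group of units of the monoid `F_{e,f}` (whose identity is `f`). -/
def UFef {S : Type*} [Monoid S] (e f : S) : Set S :=
  {x ∈ Fef e f | ∃ y ∈ Fef e f, x * y = f ∧ y * x = f}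

/-- The centre of a subset `T`. -/
def ZIn {S : Type*} [Mul S] (T : Set S) : Set S := {x ∈ T | ∀ y ∈ T, x * y = y * x}

/-- Two subsets are isomorphic as semigroups (with the induced multiplication). -/
def SubIso {S : Type*} [Mul S] (A B : Set S) : Prop :=
  ∃ φ : S → S, Set.BijOn φ A B ∧ ∀ a ∈ A, ∀ b ∈ A, φ (a * b) = φ a * φ b

/-- A subcentral idempotent series between `0` and `a`. -/
def IsSubcentralSeriesBetween {S : Type*} [Monoid S] [Zero S] (n : ℕ) (c : ℕ → S) (a : S) :
    Prop :=
  c 0 = 0 ∧ c n = a ∧ (∀ i ≤ n, IsIdempotentElem (c i)) ∧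
    ∀ i < n, CentralIn (upfilter (c i)) (c (i + 1))

/-- A subcentral idempotent series of `S` (between `0` and `1`). -/
def IsSubcentralSeries {S : Type*} [Monoid S] [Zero S] (n : ℕ) (c : ℕ → S) : Prop :=
  IsSubcentralSeriesBetween n c 1

/-- A central idempotent series of `S`. -/
def IsCentralSeries {S : Type*} [Monoid S] [Zero S] (n : ℕ) (c : ℕ → S) : Prop :=
  c 0 = 0 ∧ c n = 1 ∧ (∀ i ≤ n, IsIdempotentElem (c i)) ∧
    (∀ i < n, NatLe (c i) (c (i + 1))) ∧
    ∀ i < n, CentralIn Set.univ (c (i + 1))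

/-- A subcentral idempotent: one occurring in some subcentral idempotent series of `S`. -/
def IsSubcentralIdem {S : Type*} [Monoid S] [Zero S] (e : S) : Prop :=
  ∃ (n : ℕ) (c : ℕ → S), IsSubcentralSeries n c ∧ ∃ i ≤ n, c i = e

/-- A `G`-nilpotent series: a chain of central idempotents from `0` to `1` with
`F_{eᵢ,eᵢ₊₁} ⊆ Z(F_{0,eᵢ₊₁})`. -/
def GNilpotentSeries {S : Type*} [Monoid S] [Zero S] (n : ℕ) (c : ℕ → S) : Prop :=
  c 0 = 0 ∧ c n = 1 ∧ (∀ i ≤ n, IsIdempotentElem (c i) ∧ CentralIn Set.univ (c i)) ∧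
    (∀ i < n, NatLe (c i) (c (i + 1))) ∧
    ∀ i < n, Fef (c i) (c (i + 1)) ⊆ ZIn (Fef 0 (c (i + 1)))

/-- A `G`-solvable series: a chain of central idempotents from `0` to `1` with
each `F_{eᵢ,eᵢ₊₁}` commutative. -/
def GSolvableSeries {S : Type*} [Monoid S] [Zero S] (n : ℕ) (c : ℕ → S) : Prop :=
  c 0 = 0 ∧ c n = 1 ∧ (∀ i ≤ n, IsIdempotentElem (c i) ∧ CentralIn Set.univ (c i)) ∧
    (∀ i < n, NatLe (c i) (c (i + 1))) ∧
    ∀ i < n, ∀ x ∈ Fef (c i) (c (i + 1)), ∀ y ∈ Fef (c i) (c (i + 1)), x * y = y * x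

/-- `S` is `G`-nilpotent. -/
def GNilpotent (S : Type*) [Monoid S] [Zero S] : Prop :=
  ∃ (n : ℕ) (c : ℕ → S), GNilpotentSeries n c

/-- `S` is `G`-solvable. -/
def GSolvable (S : Type*) [Monoid S] [Zero S] : Prop :=
  ∃ (n : ℕ) (c : ℕ → S), GSolvableSeries n c

/-- Two idempotent series are isomorphic: same length, and a one-to-one correspondence
between their factors under which corresponding factors are isomorphic. -/
def SeriesIso {S : Type*} [Monoid S] (n : ℕ) (c : ℕ → S) (n' : ℕ) (d : ℕ → S) : Prop :=
  n = n' ∧ ∃ σ : ℕ → ℕ, Set.BijOn σ {i | i < n} {i | i < n'} ∧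
    ∀ i < n, SubIso (Fef (c i) (c (i + 1))) (Fef (d (σ i)) (d (σ i + 1)))

/-- A composition series (for a kind `P` of series): it has no repeated terms, and any
refinement of it (of the same kind) only repeats its terms. -/
def IsCompositionOf {S : Type*} (P : ℕ → (ℕ → S) → Prop) (n : ℕ) (c : ℕ → S) : Prop :=
  P n c ∧ (∀ i ≤ n, ∀ j ≤ n, c i = c j → i = j) ∧
    ∀ (m : ℕ) (d : ℕ → S), P m d → (∀ i ≤ n, ∃ j ≤ m, d j = c i) →
      ∀ j ≤ m, ∃ i ≤ n, d j = c i

/-!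
If `e ≤ f` are idempotents, then `f` is central in `e↑` exactly when `fθ` is normal in `eθ`: by
factorizability the elements of `e↑` are products of idempotents and elements of `eθ`, and
conjugating `f` by a unit conjugates `fθ`. So subcentral series correspond to subnormal series of
subgroups lying in the image of `θ`. Intersecting such a series with `eθ` gives a subnormal series
again, and since `0θ = G` this turns a subcentral series through `f` into one from `e` to `f`.
Splicing these between consecutive terms of the given chain produces the refinement.
-/

section Idempotents

variable {S : Type*} [InverseMonoid S] {e f : S}

namespace InverseMonoid

theorem inv_eq_self_of_isIdempotentElem (he : IsIdempotentElem e) : e⁻¹ = e :=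
  (inv_unique e e (by rw [he.eq, he.eq]) (by rw [he.eq, he.eq])).symm

theorem isIdempotentElem_mul (he : IsIdempotentElem e) (hf : IsIdempotentElem f) :
    IsIdempotentElem (e * f) := by
  -- Uniqueness of the inverse forces `x = f * x * e`, so `x` is idempotent, hence equal to `x⁻¹`.
  set x := (e * f)⁻¹
  have hfx : e * (f * (x * (e * f))) = e * f := by
    simpa only [mul_assoc] using mul_inv_mul (e * f)
  have hxe : x * (e * (f * x)) = x := by
    simpa only [mul_assoc] using inv_mul_inv (e * f)
  have hxe_mul (z : S) : x * (e * (f * (x * z))) = x * z := by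
    simpa only [mul_assoc] using congrArg (· * z) hxe
  have sandwich : f * x * e = x := by
    apply inv_unique
    · simp only [mul_assoc, he.mul_self_mul, hf.mul_self_mul, hfx]
    · simp only [mul_assoc, he.mul_self_mul, hf.mul_self_mul, hxe_mul]
  have x_idem : IsIdempotentElem x := by
    rw [← sandwich, IsIdempotentElem]
    simp only [mul_assoc, hxe_mul]
  have ef_eq : e * f = x⁻¹ :=
    inv_unique x (e * f) (by simpa only [mul_assoc] using hxe) (by simpa only [mul_assoc] using hfx)
  rwa [ef_eq, inv_eq_self_of_isIdempotentElem x_idem]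

theorem commute_of_isIdempotentElem (he : IsIdempotentElem e) (hf : IsIdempotentElem f) :
    Commute e f := by
  have ef_idem := isIdempotentElem_mul he hf
  have fe_idem := isIdempotentElem_mul hf he
  have fe_eq : f * e = (e * f)⁻¹ := by
    apply inv_unique
    · simpa only [mul_assoc, he.mul_self_mul, hf.mul_self_mul] using ef_idem.eq
    · simpa only [mul_assoc, he.mul_self_mul, hf.mul_self_mul] using fe_idem.eq
  exact (fe_eq.trans (inv_eq_self_of_isIdempotentElem ef_idem)).symm

end InverseMonoid

theorem NatLe.mul_eq_left {M : Type*} [Monoid M] {a b : M} (h : NatLe a b)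
    (hb : IsIdempotentElem b) : a * b = a := by
  obtain ⟨k, -, rfl⟩ := h
  exact hb.mul_mul_self k

theorem NatLe.antisymm_of_isIdempotentElem (hef : NatLe e f) (hfe : NatLe f e)
    (he : IsIdempotentElem e) (hf : IsIdempotentElem f) : e = f := by
  rw [← hef.mul_eq_left hf, (InverseMonoid.commute_of_isIdempotentElem he hf).eq,
    hfe.mul_eq_left he]

end Idempotents

section NaturalConnection

variable {S : Type*}

section Monoid

variable [Monoid S] {e f : S}

theorem mem_natconn {g : Sˣ} : g ∈ natconn e ↔ e * (g : S) = e := Iff.rfl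

theorem natconn_le_natconn (h : NatLe e f) : natconn f ≤ natconn e := by
  obtain ⟨k, -, rfl⟩ := h
  intro g hg
  rw [mem_natconn, mul_assoc, mem_natconn.1 hg]

theorem natconn_conj (e : S) (g : Sˣ) :
    natconn (g * e * ↑g⁻¹) = (natconn e).map (MulAut.conj g : Sˣ →* Sˣ) := by
  ext u
  refine Iff.trans ?_ Subgroup.mem_map_equiv.symm
  rw [MulAut.conj_symm_apply, mem_natconn, mem_natconn, Units.eq_mul_inv_iff_mul_eq,
    ← Units.mul_right_inj g]
  simp only [Units.val_mul, mul_assoc, Units.mul_right_inj]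

theorem mem_upfilter_of_mem_natconn (he : IsIdempotentElem e) {g : Sˣ} (hg : g ∈ natconn e) :
    (g : S) ∈ upfilter e :=
  ⟨e, he, (mem_natconn.1 hg).symm⟩

end Monoid

/-- The natural connection reflects order: with `natconn_le_natconn`, it is a dual order embedding
of the idempotents into the lattice of subgroups of the group of units. -/
def NatconnReflectsOrder (S : Type*) [Monoid S] : Prop :=
  ∀ ⦃e f : S⦄, IsIdempotentElem e → IsIdempotentElem f → natconn f ≤ natconn e → NatLe e f

variable [InverseMonoid S] {e f : S}

theorem NatconnReflectsOrder.injOn (hθ : NatconnReflectsOrder S) :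
    Set.InjOn natconn {e : S | IsIdempotentElem e} := fun _ he _ hf h =>
  (hθ he hf h.ge).antisymm_of_isIdempotentElem (hθ hf he h.le) he hf

theorem mem_normalizer_natconn_iff_commute (hθ : NatconnReflectsOrder S)
    (he : IsIdempotentElem e) {g : Sˣ} :
    g ∈ Subgroup.normalizer (natconn e : Set Sˣ) ↔ Commute (g : S) e := by
  have conj_idem : IsIdempotentElem (g * e * ↑g⁻¹ : S) := by
    simp only [IsIdempotentElem, mul_assoc, Units.inv_mul_cancel_left, he.mul_self_mul]
  rw [Subgroup.mem_normalizer_iff_map_conj_eq, ← natconn_conj, hθ.injOn.eq_iff conj_idem he,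
    Units.commute_iff_mul_inv_cancel]

theorem exists_eq_mul_of_mem_upfilter (hS : Factorizable S) (he : IsIdempotentElem e) {s : S}
    (hs : s ∈ upfilter e) :
    ∃ h : S, ∃ g ∈ natconn e, IsIdempotentElem h ∧ s = h * (g : S) := by
  obtain ⟨h, _, hh, ⟨g, rfl⟩, rfl⟩ := hS s
  obtain ⟨k, hk, e_eq⟩ := hs
  refine ⟨h, g, ?_, hh, rfl⟩
  have p_idem : IsIdempotentElem (k * h) := InverseMonoid.isIdempotentElem_mul hk hh
  rw [← mul_assoc] at e_eq
  have p_mul_e : k * h * e = e := by rw [e_eq, p_idem.mul_self_mul]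
  have e_mul_p : e * (k * h) = k * h := by
    rw [← Units.mul_left_inj g, mul_assoc, ← e_eq, he.eq]
  have p_eq : k * h = e := by
    rw [← e_mul_p, (InverseMonoid.commute_of_isIdempotentElem he p_idem).eq, p_mul_e]
  rw [mem_natconn, ← p_eq, ← e_eq, p_eq]

theorem centralIn_upfilter_iff (hS : Factorizable S) (hθ : NatconnReflectsOrder S)
    (he : IsIdempotentElem e) (hf : IsIdempotentElem f) (hef : NatLe e f) :
    CentralIn (upfilter e) f ↔ ((natconn f).subgroupOf (natconn e)).Normal := by
  rw [Subgroup.normal_subgroupOf_iff_le_normalizer (natconn_le_natconn hef)]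
  constructor
  · rintro ⟨-, hcomm⟩ g hg
    have hfg : Commute f (g : S) := hcomm g (mem_upfilter_of_mem_natconn he hg)
    exact (mem_normalizer_natconn_iff_commute hθ hf).2 hfg.symm
  · refine fun hnorm => ⟨hef, fun s hs => ?_⟩
    obtain ⟨h, g, hg, hh, rfl⟩ := exists_eq_mul_of_mem_upfilter hS he hs
    exact (InverseMonoid.commute_of_isIdempotentElem hf hh).mul_right
      ((mem_normalizer_natconn_iff_commute hθ hf).1 (hnorm hg)).symm

end NaturalConnection

section SubcentralStep

variable {S : Type*}

/-- The relation between consecutive terms of a subcentral idempotent series; its reflexive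
transitive closure is joinability by such a series. -/
structure SubcentralStep [Monoid S] (e f : S) : Prop where
  isIdempotentElem_left : IsIdempotentElem e
  isIdempotentElem_right : IsIdempotentElem f
  centralIn : CentralIn (upfilter e) f

variable [InverseMonoid S] {a b d a' b' : S}

theorem SubcentralStep.of_natconn_eq_inf (hS : Factorizable S) (hθ : NatconnReflectsOrder S)
    (hab : SubcentralStep a b) (ha' : IsIdempotentElem a') (hb' : IsIdempotentElem b')
    (a'_eq : natconn a' = natconn a ⊓ natconn d) (b'_eq : natconn b' = natconn b ⊓ natconn d) :
    SubcentralStep a' b' := by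
  obtain ⟨ha, hb, hcentral⟩ := hab
  have a_le_b : NatLe a b := hcentral.1
  have a'_le_b' : NatLe a' b' := hθ ha' hb' <| by
    rw [a'_eq, b'_eq]
    exact inf_le_inf_right _ (natconn_le_natconn a_le_b)
  refine ⟨ha', hb', (centralIn_upfilter_iff hS hθ ha' hb' a'_le_b').2 ?_⟩
  have := (centralIn_upfilter_iff hS hθ ha hb a_le_b).1 hcentral
  rw [a'_eq, b'_eq]
  exact Subgroup.inf_subgroupOf_inf_normal_of_left _

theorem reflTransGen_subcentralStep_of_natconn_eq_inf (hS : Factorizable S)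
    (hθ : NatconnReflectsOrder S) (hinf : InfClosed (natconn '' {e : S | IsIdempotentElem e}))
    (hab : Relation.ReflTransGen SubcentralStep a b) (hd : IsIdempotentElem d)
    (ha' : IsIdempotentElem a') (hb' : IsIdempotentElem b')
    (a'_eq : natconn a' = natconn a ⊓ natconn d) (b'_eq : natconn b' = natconn b ⊓ natconn d) :
    Relation.ReflTransGen SubcentralStep a' b' := by
  induction hab generalizing b' with
  | refl => rw [hθ.injOn ha' hb' (a'_eq.trans b'_eq.symm)]
  | @tail x y _ hxy ih =>
    obtain ⟨x', hx', x'_eq⟩ := hinf (Set.mem_image_of_mem _ hxy.isIdempotentElem_left)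
      (Set.mem_image_of_mem _ hd)
    exact (ih hx' x'_eq).tail (hxy.of_natconn_eq_inf hS hθ hx' hb' x'_eq b'_eq)

end SubcentralStep

section Series

variable {S : Type*}

section Monoid

variable [Monoid S] [Zero S] {n : ℕ} {c : ℕ → S} {a b : S}

theorem IsSubcentralSeriesBetween.isIdempotentElem (hc : IsSubcentralSeriesBetween n c a) :
    IsIdempotentElem a :=
  hc.2.1 ▸ hc.2.2.1 n le_rfl

theorem IsSubcentralSeriesBetween.truncate (hc : IsSubcentralSeriesBetween n c a) {i : ℕ}
    (hi : i ≤ n) : IsSubcentralSeriesBetween i c (c i) :=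
  ⟨hc.1, rfl, fun j hj => hc.2.2.1 j (hj.trans hi), fun j hj => hc.2.2.2 j (hj.trans_le hi)⟩

theorem IsSubcentralIdem.exists_series (ha : IsSubcentralIdem a) :
    ∃ (n : ℕ) (c : ℕ → S), IsSubcentralSeriesBetween n c a := by
  obtain ⟨n, c, hc, i, hi, rfl⟩ := ha
  exact ⟨i, c, hc.truncate hi⟩

theorem IsSubcentralIdem.isIdempotentElem (ha : IsSubcentralIdem a) : IsIdempotentElem a :=
  let ⟨_, _, hc⟩ := ha.exists_series
  hc.isIdempotentElem

theorem IsSubcentralIdem.isSubcentralIdem_one (ha : IsSubcentralIdem a) :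
    IsSubcentralIdem (1 : S) :=
  let ⟨n, c, hc, _⟩ := ha
  ⟨n, c, hc, n, le_rfl, hc.2.1⟩

theorem IsSubcentralSeriesBetween.reflTransGen (hc : IsSubcentralSeriesBetween n c a) :
    Relation.ReflTransGen SubcentralStep 0 a := by
  obtain ⟨c_zero, rfl, hidem, hcentral⟩ := hc
  rw [← c_zero]
  exact (reflTransGen_of_succ_of_le (fun i j => SubcentralStep (c i) (c j))
    (fun i hi => ⟨hidem i hi.2.le, hidem (i + 1) hi.2, hcentral i hi.2⟩) n.zero_le).lift c
    fun _ _ => id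

theorem IsSubcentralSeriesBetween.snoc (hc : IsSubcentralSeriesBetween n c a)
    (hab : SubcentralStep a b) :
    IsSubcentralSeriesBetween (n + 1) (Function.update c (n + 1) b) b := by
  obtain ⟨c_zero, rfl, hidem, hcentral⟩ := hc
  have update_eq {i : ℕ} (hi : i ≤ n) : Function.update c (n + 1) b i = c i :=
    Function.update_of_ne (by lia) _ _
  refine ⟨by rw [update_eq n.zero_le, c_zero], Function.update_self .., fun i hi => ?_,
    fun i hi => ?_⟩
  · obtain hi | rfl := Nat.le_succ_iff.1 hi
    · exact update_eq hi ▸ hidem i hi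
    · simpa only [Function.update_self] using hab.isIdempotentElem_right
  · rw [update_eq (Nat.lt_succ_iff.1 hi)]
    obtain hi | rfl := Nat.lt_succ_iff_lt_or_eq.1 hi
    · exact update_eq hi ▸ hcentral i hi
    · simpa only [Function.update_self] using hab.centralIn

theorem IsSubcentralSeriesBetween.exists_extension (hc : IsSubcentralSeriesBetween n c a)
    (hab : Relation.ReflTransGen SubcentralStep a b) :
    ∃ (n' : ℕ) (c' : ℕ → S), IsSubcentralSeriesBetween n' c' b ∧
      ∀ i ≤ n, ∃ j ≤ n', c' j = c i := by
  induction hab with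
  | refl => exact ⟨n, c, hc, fun i hi => ⟨i, hi, rfl⟩⟩
  | @tail x y _ hxy ih =>
    obtain ⟨k, d, hd, hcd⟩ := ih
    refine ⟨k + 1, _, hd.snoc hxy, fun i hi => ?_⟩
    obtain ⟨j, hj, d_eq⟩ := hcd i hi
    exact ⟨j, by lia, by rw [Function.update_of_ne (by lia), d_eq]⟩

theorem IsSubcentralSeriesBetween.exists_through {m : ℕ} {f : ℕ → S}
    (hc : IsSubcentralSeriesBetween n c (f 0))
    (hf : ∀ i < m, Relation.ReflTransGen SubcentralStep (f i) (f (i + 1))) :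
    ∃ (n' : ℕ) (c' : ℕ → S), IsSubcentralSeriesBetween n' c' (f m) ∧
      ∀ i ≤ m, ∃ j ≤ n', c' j = f i := by
  induction m with
  | zero => exact ⟨n, c, hc, fun i hi => ⟨n, le_rfl, by rw [hc.2.1, Nat.le_zero.1 hi]⟩⟩
  | succ m ih =>
    obtain ⟨k, d, hd, hfd⟩ := ih fun i hi => hf i (by lia)
    obtain ⟨n', c', hc', hdc'⟩ := hd.exists_extension (hf m m.lt_succ_self)
    refine ⟨n', c', hc', fun i hi => ?_⟩
    obtain hi | rfl := Nat.le_succ_iff.1 hi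
    · obtain ⟨j, hj, d_eq⟩ := hfd i hi
      obtain ⟨l, hl, c'_eq⟩ := hdc' j hj
      exact ⟨l, hl, c'_eq.trans d_eq⟩
    · exact ⟨n', le_rfl, hc'.2.1⟩

end Monoid

variable [InverseMonoidWithZero S] {e f : S}

theorem natconn_zero : natconn (0 : S) = ⊤ :=
  (Subgroup.eq_top_iff' _).2 fun g => InverseMonoidWithZero.zero_mul (g : S)

theorem IsSubcentralIdem.reflTransGen_of_natLe (hS : Factorizable S)
    (hθ : NatconnReflectsOrder S) (hinf : InfClosed (natconn '' {e : S | IsIdempotentElem e}))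
    (hf : IsSubcentralIdem f) (he : IsIdempotentElem e) (hef : NatLe e f) :
    Relation.ReflTransGen SubcentralStep e f := by
  obtain ⟨n, c, hc⟩ := hf.exists_series
  refine reflTransGen_subcentralStep_of_natconn_eq_inf hS hθ hinf hc.reflTransGen he he
    hf.isIdempotentElem ?_ ?_
  · rw [natconn_zero, top_inf_eq]
  · rw [inf_eq_left.2 (natconn_le_natconn hef)]

end Series

theorem stmt_4_general {S : Type*} [InverseMonoidWithZero S] (hS : Factorizable S)
    (hθ : NatconnReflectsOrder S) (hinf : InfClosed (natconn '' {e : S | IsIdempotentElem e}))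
    (m : ℕ) (f : ℕ → S) (hsc : ∀ i ≤ m, IsSubcentralIdem (f i))
    (hchain : ∀ i < m, NatLe (f i) (f (i + 1))) :
    ∃ (n : ℕ) (c : ℕ → S), IsSubcentralSeries n c ∧ ∀ i ≤ m, ∃ j ≤ n, c j = f i := by
  have reach {a b : S} (ha : IsSubcentralIdem a) (hb : IsSubcentralIdem b) (hab : NatLe a b) :
      Relation.ReflTransGen SubcentralStep a b :=
    hb.reflTransGen_of_natLe hS hθ hinf ha.isIdempotentElem hab
  obtain ⟨_, _, hfirst⟩ := (hsc 0 m.zero_le).exists_series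
  obtain ⟨k, d, hd, hfd⟩ := hfirst.exists_through (m := m) fun i hi =>
    reach (hsc i hi.le) (hsc (i + 1) hi) (hchain i hi)
  have hlast : IsSubcentralIdem (f m) := hsc m le_rfl
  obtain ⟨n, c, hc, hdc⟩ := hd.exists_extension <|
    reach hlast hlast.isSubcentralIdem_one ⟨f m, hlast.isIdempotentElem, (mul_one _).symm⟩
  refine ⟨n, c, hc, fun i hi => ?_⟩
  obtain ⟨j, hj, d_eq⟩ := hfd i hi
  obtain ⟨l, hl, c_eq⟩ := hdc j hj
  exact ⟨l, hl, c_eq.trans d_eq⟩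

/-- In a factorizable inverse monoid with zero whose natural connection is
a dual isomorphism onto a sublattice of the lattice of subgroups of the group of units,
every finite chain `e₀ ≤ e₁ ≤ ⋯ ≤ eₘ` of subcentral idempotents can be refined to a
subcentral idempotent series of `S`. -/
theorem stmt_4 {S : Type*} [InverseMonoidWithZero S] (hfact : Factorizable S)
    (hθ : NatconnDualIso S) (m : ℕ) (f : ℕ → S)
    (hsc : ∀ i ≤ m, IsSubcentralIdem (f i))
    (hchain : ∀ i < m, NatLe (f i) (f (i + 1))) :
    ∃ (n : ℕ) (c : ℕ → S), IsSubcentralSeries n c ∧ ∀ i ≤ m, ∃ j ≤ n, c j = f i := by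
  refine stmt_4_general hfact (fun e f he hf => (hθ.2.1 e f he hf).2) ?_ m f hsc hchain
  rintro _ ⟨e, he, rfl⟩ _ ⟨f, hf, rfl⟩
  exact (hθ.2.2 e f he hf).2
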